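/- arXiv:1311.1405 — 2 statements merged into one kernel-verified Lean document; each statement's English description precedes it below -/
import Mathlib

section
/- Let d ≥ 1, let Φ₁, Φ₂, a₁, a₂ be Schwartz functions on ℝ^{2d}, and set Φ₀ = π^d (Φ₁#Φ₂) and a₀ = a₁#a₂. For j = 0,1,2 define F_j(X,Y) = 𝒱_{Φ_j} a_j(X+Y, X−Y). Then for all X₀, X₂ ∈ ℝ^{2d}: F₀(X₂, X₀) = ∫_{ℝ^{2d}} e^{2i σ(X₁−X₀, X₂−X₀)} F₁(X₁, X₀) F₂(X₂, X₁) dX₁. -/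
open MeasureTheory Filter
open scoped ENNReal RealInnerProductSpace BigOperators

noncomputable section

/-- The phase space `ℝ^d × ℝ^d ≃ ℝ^{2d}`. -/
abbrev PhS (d : ℕ) : Type := EuclideanSpace ℝ (Fin d) × EuclideanSpace ℝ (Fin d)

/-- The symplectic form `σ((x,ξ),(y,η)) = ⟨y,ξ⟩ - ⟨x,η⟩`. -/
def symplForm {d : ℕ} (X Y : PhS d) : ℝ := ⟪Y.1, X.2⟫ - ⟪X.1, Y.2⟫

/-- The symplectic Fourier transform `(F_σ a)(X) = π^{-d} ∫ a(Y) e^{2iσ(X,Y)} dY`. -/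
def symplFT (d : ℕ) (a : PhS d → ℂ) (X : PhS d) : ℂ :=
  ((Real.pi : ℂ) ^ d)⁻¹ * ∫ Y : PhS d, a Y * Complex.exp (2 * Complex.I * (symplForm X Y : ℂ))

/-- The twisted convolution
`(a ∗_σ b)(X) = (2/π)^{d/2} ∫ a(X-Y) b(Y) e^{2iσ(X,Y)} dY`. -/
def twistConv (d : ℕ) (a b : PhS d → ℂ) (X : PhS d) : ℂ :=
  (((2 / Real.pi) ^ ((d : ℝ) / 2) : ℝ) : ℂ) *
    ∫ Y : PhS d, a (X - Y) * b Y * Complex.exp (2 * Complex.I * (symplForm X Y : ℂ))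

/-- The Weyl product `a # b = (2π)^{-d/2} a ∗_σ (F_σ b)`. -/
def weylProd (d : ℕ) (a b : PhS d → ℂ) : PhS d → ℂ := fun X =>
  (((2 * Real.pi) ^ (-(d : ℝ) / 2) : ℝ) : ℂ) * twistConv d a (symplFT d b) X

/-- The `N`-fold Weyl product `a₁ # ⋯ # a_N` of a list of symbols. -/
def weylProdList (d : ℕ) : List (PhS d → ℂ) → (PhS d → ℂ)
  | [] => fun _ => 0
  | [a] => a
  | a :: b :: l => weylProd d a (weylProdList d (b :: l))

/-- The symplectic short-time Fourier transform
`𝒱_Φ a (X,Y) = π^{-d} ∫ a(Z) conj(Φ(Z-X)) e^{2iσ(Y,Z)} dZ`. -/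
def symplSTFT (d : ℕ) (Φ a : PhS d → ℂ) (X Y : PhS d) : ℂ :=
  ((Real.pi : ℂ) ^ d)⁻¹ *
    ∫ Z : PhS d, a Z * (starRingEnd ℂ) (Φ (Z - X)) *
      Complex.exp (2 * Complex.I * (symplForm Y Z : ℂ))

/-- The `L^p` norm (with values in `[0,∞]`) of an `ℝ≥0∞`-valued function,
with the convention of an essential supremum when `p = ∞`. -/
def lpNormENN {α : Type*} [MeasurableSpace α] (μ : Measure α) (p : ℝ≥0∞)
    (f : α → ℝ≥0∞) : ℝ≥0∞ :=
  if p = ∞ then essSup f μ else (∫⁻ x, f x ^ p.toReal ∂μ) ^ (1 / p.toReal)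

/-- The modulation space norm `‖a‖_{ℳ^{p,q}_{(ω)}}` with respect to the window `Φ`. -/
def modNorm (d : ℕ) (p q : ℝ≥0∞) (ω : PhS d × PhS d → ℝ) (Φ a : PhS d → ℂ) : ℝ≥0∞ :=
  lpNormENN volume q fun Y =>
    lpNormENN volume p fun X => ENNReal.ofReal (‖symplSTFT d Φ a X Y‖ * ω (X, Y))

/-- The Wiener amalgam space norm `‖a‖_{𝒲^{p,q}_{(ω)}}` with respect to the window `Φ`. -/
def wienerNorm (d : ℕ) (p q : ℝ≥0∞) (ω : PhS d × PhS d → ℝ) (Φ a : PhS d → ℂ) : ℝ≥0∞ :=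
  lpNormENN volume p fun X =>
    lpNormENN volume q fun Y => ENNReal.ofReal (‖symplSTFT d Φ a X Y‖ * ω (X, Y))

/-- Membership in the class `𝒫_E` of positive, locally bounded, moderate weights. -/
def IsModerateWeight {E : Type*} [NormedAddCommGroup E] (ω : E → ℝ) : Prop :=
  (∀ x, 0 < ω x) ∧ (∀ r : ℝ, ∃ M : ℝ, ∀ x, ‖x‖ ≤ r → ω x ≤ M) ∧
    ∃ C c : ℝ, 0 < C ∧ 0 < c ∧ ∀ x y, ω (x + y) ≤ C * ω x * Real.exp (c * ‖y‖)

/-- The real number `1/p ∈ [0,1]` associated to `p ∈ [1,∞]`. -/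
def rcp (p : ℝ≥0∞) : ℝ := (p⁻¹).toReal

/-- The Hölder–Young exponent function `R_N(p) = (N-1)⁻¹ (Σ_{j=0}^N 1/p_j - 1)`. -/
def RN (N : ℕ) (p : Fin (N + 1) → ℝ≥0∞) : ℝ :=
  ((∑ j, rcp (p j)) - 1) / ((N : ℝ) - 1)

/-- The Weyl weight condition:
`1 ≲ ω₀(X_N+X₀, X_N-X₀) ∏_{j=1}^N ω_j(X_j+X_{j-1}, X_j-X_{j-1})`. -/
def WeylWeightCond (d N : ℕ) (ω : Fin (N + 1) → (PhS d × PhS d → ℝ)) : Prop :=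
  ∃ C : ℝ, 0 < C ∧ ∀ X : Fin (N + 1) → PhS d,
    1 ≤ C * ω 0 (X (Fin.last N) + X 0, X (Fin.last N) - X 0) *
      ∏ j : Fin N, ω j.succ (X j.succ + X j.castSucc, X j.succ - X j.castSucc)

end

noncomputable section

lemma sf_add_left {d : ℕ} (X Y Z : PhS d) : symplForm (X + Y) Z = symplForm X Z + symplForm Y Z := by
  simp only [symplForm, Prod.fst_add, Prod.snd_add, inner_add_left, inner_add_right]; ring

lemma sf_sub_left {d : ℕ} (X Y Z : PhS d) : symplForm (X - Y) Z = symplForm X Z - symplForm Y Z := by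
  simp only [symplForm, Prod.fst_sub, Prod.snd_sub, inner_sub_left, inner_sub_right]; ring

lemma sf_swap {d : ℕ} (X Y : PhS d) : symplForm X Y = - symplForm Y X := by
  simp only [symplForm]; ring

lemma sf_self {d : ℕ} (X : PhS d) : symplForm X X = 0 := by
  simp only [symplForm]; ring

lemma sf_add_right {d : ℕ} (X Y Z : PhS d) : symplForm Z (X + Y) = symplForm Z X + symplForm Z Y := by
  rw [sf_swap, sf_add_left, sf_swap Z X, sf_swap Z Y]; ring

lemma sf_sub_right {d : ℕ} (X Y Z : PhS d) : symplForm Z (X - Y) = symplForm Z X - symplForm Z Y := by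
  rw [sf_swap, sf_sub_left, sf_swap Z X, sf_swap Z Y]; ring

lemma sf_cont {d : ℕ} : Continuous (fun p : PhS d × PhS d => symplForm p.1 p.2) := by
  unfold symplForm; fun_prop

lemma sf_cont2 {d : ℕ} {T : Type*} [TopologicalSpace T] {f g : T → PhS d}
    (hf : Continuous f) (hg : Continuous g) : Continuous (fun t => symplForm (f t) (g t)) :=
  sf_cont.comp (hf.prodMk hg)

instance haarPhS (d : ℕ) : (volume : Measure (PhS d)).IsAddHaarMeasure :=
  Measure.prod.instIsAddHaarMeasure _ _

/-- phase -/
def ph (t : ℝ) : ℂ := Complex.exp (2 * Complex.I * (t : ℂ))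

lemma ph_add (s t : ℝ) : ph (s + t) = ph s * ph t := by
  unfold ph; rw [← Complex.exp_add]; congr 1; push_cast; ring

lemma ph_norm (t : ℝ) : ‖ph t‖ = 1 := by
  unfold ph
  have : (2 * Complex.I * (t : ℂ)) = ((2 * t : ℝ) : ℂ) * Complex.I := by push_cast; ring
  rw [this, Complex.norm_exp_ofReal_mul_I]

lemma ph_conj (t : ℝ) : (starRingEnd ℂ) (ph t) = ph (-t) := by
  unfold ph; rw [← Complex.exp_conj]; congr 1; simp only [map_mul, Complex.conj_I, Complex.conj_ofReal, map_ofNat]; push_cast; ring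

lemma ph_cont : Continuous ph := by unfold ph; fun_prop

/-- the rotated embedding into the Hilbert space -/
def KK (d : ℕ) : PhS d ≃L[ℝ] WithLp 2 (PhS d) :=
  ((ContinuousLinearEquiv.prodComm ℝ (EuclideanSpace ℝ (Fin d)) (EuclideanSpace ℝ (Fin d))).trans
    ((ContinuousLinearEquiv.neg ℝ).prodCongr (ContinuousLinearEquiv.refl ℝ _))).trans
   ((ContinuousLinearEquiv.smulLeft (Units.mk0 (Real.pi⁻¹) (inv_ne_zero Real.pi_ne_zero))).trans
    (WithLp.prodContinuousLinearEquiv 2 ℝ (EuclideanSpace ℝ (Fin d)) (EuclideanSpace ℝ (Fin d))).symm)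

lemma KK_apply {d : ℕ} (X : PhS d) : KK d X = WithLp.toLp 2 (Real.pi⁻¹ • ((-X.2, X.1) : PhS d)) := rfl

lemma KK_inner {d : ℕ} (X Y : PhS d) :
    inner ℝ (WithLp.toLp 2 Y) (KK d X) = - (Real.pi⁻¹ * symplForm X Y) := by
  rw [KK_apply, WithLp.prod_inner_apply]
  simp only [symplForm, Prod.smul_fst, Prod.smul_snd, inner_smul_right, inner_neg_right]
  rw [real_inner_comm Y.2 X.1]; ring

lemma KK_inner' {d : ℕ} (X Y : PhS d) :
    inner ℝ (KK d X) (WithLp.toLp 2 Y) = - (Real.pi⁻¹ * symplForm X Y) := by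
  rw [real_inner_comm, KK_inner]

open FourierTransform in
/-- symplectic FT as a Schwartz function -/
def sFT {d : ℕ} (a : SchwartzMap (PhS d) ℂ) : SchwartzMap (PhS d) ℂ :=
  ((Real.pi : ℂ) ^ d)⁻¹ • SchwartzMap.compCLMOfContinuousLinearEquiv ℂ (KK d)
    (𝓕 (SchwartzMap.compCLMOfContinuousLinearEquiv ℂ
      (WithLp.prodContinuousLinearEquiv 2 ℝ (EuclideanSpace ℝ (Fin d)) (EuclideanSpace ℝ (Fin d))) a))

lemma int_toLp {d : ℕ} (g : WithLp 2 (PhS d) → ℂ) :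
    ∫ v, g v = ∫ Y : PhS d, g (WithLp.toLp 2 Y) :=
  ((WithLp.volume_preserving_toLp (EuclideanSpace ℝ (Fin d)) (EuclideanSpace ℝ (Fin d))).integral_comp
    (MeasurableEquiv.toLp 2 (PhS d)).measurableEmbedding g).symm

open FourierTransform in
lemma sFT_eq {d : ℕ} (a : SchwartzMap (PhS d) ℂ) : symplFT d a = sFT a := by
  funext X
  simp only [sFT, symplFT, _root_.smul_apply, smul_eq_mul,
    SchwartzMap.compCLMOfContinuousLinearEquiv_apply, Function.comp]
  congr 1
  rw [SchwartzMap.fourier_coe, Real.fourier_eq', int_toLp]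
  congr 1; funext Y
  rw [KK_inner, smul_eq_mul, mul_comm]
  congr 2
  push_cast
  have : (Real.pi : ℂ) ≠ 0 := by exact_mod_cast Real.pi_ne_zero
  field_simp

lemma int_KK {d : ℕ} (g : WithLp 2 (PhS d) → ℂ) :
    ∫ X : PhS d, g (KK d X) = (Real.pi : ℂ) ^ (2 * d) * ∫ v, g v := by
  have h1 : MeasurePreserving (fun X : PhS d => ((-X.2, X.1) : PhS d)) volume volume :=
    ((Measure.measurePreserving_neg volume).prod (MeasurePreserving.id volume)).comp
      Measure.measurePreserving_swap
  have h2 : MeasurableEmbedding (fun X : PhS d => ((-X.2, X.1) : PhS d)) :=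
    ((ContinuousLinearEquiv.prodComm ℝ (EuclideanSpace ℝ (Fin d)) (EuclideanSpace ℝ (Fin d))).trans
    ((ContinuousLinearEquiv.neg ℝ).prodCongr (ContinuousLinearEquiv.refl ℝ _))).toHomeomorph.measurableEmbedding
  simp only [KK_apply]
  rw [h1.integral_comp h2 (fun Z : PhS d => g (WithLp.toLp 2 (Real.pi⁻¹ • Z))), 
    Measure.integral_comp_smul volume (fun Z : PhS d => g (WithLp.toLp 2 Z)), ← int_toLp]
  have : Module.finrank ℝ (PhS d) = 2 * d := by simp [two_mul]
  rw [this]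
  have hp : |(((Real.pi⁻¹) ^ (2 * d))⁻¹ : ℝ)| = Real.pi ^ (2 * d) := by
    rw [abs_of_pos (by positivity)]; simp
  rw [hp, Complex.real_smul]; push_cast; rfl

open FourierTransform in
lemma sFT_inv {d : ℕ} (a : SchwartzMap (PhS d) ℂ) (V : PhS d) :
    a V = ((Real.pi : ℂ) ^ d)⁻¹ * ∫ Y : PhS d, sFT a Y * ph (symplForm V Y) := by
  set f := SchwartzMap.compCLMOfContinuousLinearEquiv ℂ
      (WithLp.prodContinuousLinearEquiv 2 ℝ (EuclideanSpace ℝ (Fin d)) (EuclideanSpace ℝ (Fin d))) a with hf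
  have h1 : a V = (𝓕⁻ (𝓕 f)) (WithLp.toLp 2 V) := by
    rw [FourierTransform.fourierInv_fourier_eq]; rfl
  have hpi : (Real.pi : ℂ) ≠ 0 := by exact_mod_cast Real.pi_ne_zero
  rw [h1, SchwartzMap.fourierInv_coe, Real.fourierInv_eq']
  have h2 := int_KK (d := d) (fun v => Complex.exp (↑(2 * Real.pi * inner ℝ v (WithLp.toLp 2 V)) * Complex.I) • (𝓕 f) v)
  have h3 : ∀ Y : PhS d, sFT a Y * ph (symplForm V Y) = ((Real.pi : ℂ) ^ d)⁻¹ * 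
     (Complex.exp (↑(2 * Real.pi * inner ℝ (KK d Y) (WithLp.toLp 2 V)) * Complex.I) • (𝓕 f) (KK d Y)) := by
    intro Y
    rw [KK_inner', sf_swap V Y]
    simp only [sFT, _root_.smul_apply, smul_eq_mul,
      SchwartzMap.compCLMOfContinuousLinearEquiv_apply, Function.comp, ph]
    rw [mul_assoc]
    congr 1
    rw [mul_comm]
    congr 2
    push_cast
    field_simp
  simp only [h3]
  rw [integral_const_mul, h2]
  rw [← mul_assoc, ← mul_assoc]
  have : ((Real.pi : ℂ) ^ d)⁻¹ * ((Real.pi : ℂ) ^ d)⁻¹ * (Real.pi : ℂ) ^ (2 * d) = 1 := by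
    rw [two_mul, pow_add]; field_simp
  rw [this, one_mul]

lemma weyl_eq {d : ℕ} (a b : SchwartzMap (PhS d) ℂ) (X : PhS d) :
    weylProd d a b X = ((Real.pi : ℂ) ^ d)⁻¹ *
      ∫ Y, a (X - Y) * sFT b Y * ph (symplForm X Y) := by
  unfold weylProd twistConv
  rw [sFT_eq, ← mul_assoc]
  congr 1
  rw [← Complex.ofReal_mul, ← Complex.ofReal_pow, ← Complex.ofReal_inv]
  congr 1
  have hp := Real.pi_pos
  rw [Real.div_rpow (by norm_num) hp.le, Real.mul_rpow (by norm_num) hp.le, neg_div,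
    Real.rpow_neg (by norm_num), Real.rpow_neg hp.le, ← Real.rpow_natCast Real.pi d]
  have h : Real.pi ^ (d : ℝ) = Real.pi ^ ((d : ℝ) / 2) * Real.pi ^ ((d : ℝ) / 2) := by
    rw [← Real.rpow_add hp]; congr 1; ring
  rw [h]
  have h1 : (2 : ℝ) ^ ((d : ℝ) / 2) ≠ 0 := by positivity
  have h2 : Real.pi ^ ((d : ℝ) / 2) ≠ 0 := by positivity
  field_simp

lemma conj_cont : Continuous (fun z : ℂ => (starRingEnd ℂ) z) := Complex.continuous_conj

lemma stft_eq {d : ℕ} (Φ a : SchwartzMap (PhS d) ℂ) (S D : PhS d) :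
    symplSTFT d Φ a S D = ((Real.pi : ℂ) ^ d)⁻¹ *
      ∫ Y, sFT a Y * (starRingEnd ℂ) (sFT Φ (Y - D)) * ph (symplForm S Y + symplForm D S) := by
  set c := ((Real.pi : ℂ) ^ d)⁻¹ with hc
  have hcc : (starRingEnd ℂ) c = c := by simp [hc]
  let h : PhS d → PhS d → ℂ := fun V Y =>
    (starRingEnd ℂ) (Φ (V - S)) * sFT a Y * ph (symplForm V Y + symplForm D V)
  have hI : Integrable (Function.uncurry h) (volume.prod volume) := by
    have h1 : Integrable (fun V : PhS d => (starRingEnd ℂ) (Φ (V - S))) volume := by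
      have h0 := (Φ.integrable (μ := volume)).comp_sub_right S
      exact h0.norm.mono' ((conj_cont.comp (Φ.continuous.comp (by fun_prop))).aestronglyMeasurable)
        (by simp)
    have h2 := h1.mul_prod ((sFT a).integrable (μ := volume))
    refine h2.norm.mono' (Continuous.aestronglyMeasurable ?_) ?_
    · simp only [h, Function.uncurry_def]
      refine ((conj_cont.comp (Φ.continuous.comp (by fun_prop))).mul
        ((sFT a).continuous.comp (by fun_prop))).mul (ph_cont.comp ?_)
      exact (sf_cont2 (by fun_prop) (by fun_prop)).add (sf_cont2 (by fun_prop) (by fun_prop))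
    · refine Eventually.of_forall fun p => ?_
      simp only [h, Function.uncurry_def, norm_mul, ph_norm, mul_one, le_refl]
  have e1 : symplSTFT d Φ a S D = c * ∫ V, c * ∫ Y, h V Y := by
    unfold symplSTFT
    congr 1
    refine integral_congr_ae (Eventually.of_forall fun V => ?_)
    change a V * (starRingEnd ℂ) (Φ (V - S)) * ph (symplForm D V) = _
    rw [sFT_inv a V, ← hc, mul_assoc, mul_assoc, ← integral_mul_const]
    congr 1
    refine integral_congr_ae (Eventually.of_forall fun Y => ?_)
    simp only [h, ph_add]; ring
  rw [e1, integral_const_mul, integral_integral_swap hI, ← integral_const_mul]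
  congr 1
  refine integral_congr_ae (Eventually.of_forall fun Y => ?_)
  change c * ∫ V, h V Y = _
  rw [← integral_add_right_eq_self (fun V => h V Y) S, ← sFT_eq Φ]
  change _ = sFT a Y * (starRingEnd ℂ) (c * ∫ V, Φ V * ph (symplForm (Y - D) V)) * _
  rw [map_mul, hcc, ← integral_conj, ← mul_assoc, mul_comm _ c, mul_assoc, mul_assoc]
  congr 1
  rw [← integral_mul_const, ← integral_const_mul]
  refine integral_congr_ae (Eventually.of_forall fun V => ?_)
  simp only [h, map_mul, ph_conj, add_sub_cancel_right]
  have : symplForm (V + S) Y + symplForm D (V + S) =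
    -symplForm (Y - D) V + (symplForm S Y + symplForm D S) := by
    rw [sf_add_left, sf_add_right, sf_sub_left, sf_swap V Y]; ring
  rw [this, ph_add]; ring

/-- phase of the triple integral -/
def th {d : ℕ} (W D Z Y P : PhS d) : ℝ := symplForm Z Y - symplForm (Z - W) P + symplForm D Z

/-- integrand of the triple integral -/
def GG {d : ℕ} (Φ a B Q : SchwartzMap (PhS d) ℂ) (W D : PhS d) (p : (PhS d × PhS d) × PhS d) : ℂ :=
  a p.1.1 * B p.1.2 * (starRingEnd ℂ) (Q p.2) *
    ((starRingEnd ℂ) (Φ (p.1.1 + p.1.2 - W - p.2)) * ph (th W D (p.1.1 + p.1.2) p.1.2 p.2))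

lemma GG_int {d : ℕ} (Φ a B Q : SchwartzMap (PhS d) ℂ) (W D : PhS d) :
    Integrable (GG Φ a B Q W D) ((volume.prod volume).prod volume) := by
  have h1 : Integrable (fun V : PhS d => (starRingEnd ℂ) (Q V)) volume :=
    (Q.integrable (μ := volume)).norm.mono' ((conj_cont.comp Q.continuous).aestronglyMeasurable)
        (by simp)
  have h2 := ((a.integrable (μ := volume)).mul_prod (B.integrable (μ := volume))).mul_prod h1
  refine (h2.norm.mul_const (SchwartzMap.seminorm ℝ 0 0 Φ)).mono' (Continuous.aestronglyMeasurable ?_) ?_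
  · unfold GG
    refine (((a.continuous.comp (by fun_prop)).mul (B.continuous.comp (by fun_prop))).mul
      (conj_cont.comp (Q.continuous.comp (by fun_prop)))).mul
      ((conj_cont.comp (Φ.continuous.comp (by fun_prop))).mul (ph_cont.comp ?_))
    exact ((sf_cont2 (by fun_prop) (by fun_prop)).sub (sf_cont2 (by fun_prop) (by fun_prop))).add
      (sf_cont2 (by fun_prop) (by fun_prop))
  · refine Eventually.of_forall fun p => ?_
    simp only [GG, norm_mul, ph_norm, mul_one, RCLike.norm_conj]
    gcongr
    exact SchwartzMap.norm_le_seminorm ℝ Φ _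

lemma lhs_fub {d : ℕ} (G : (PhS d × PhS d) × PhS d → ℂ)
    (hG : Integrable G ((volume.prod volume).prod volume)) :
    ∫ Z, ∫ Y, ∫ P, G ((Z - Y, Y), P) = ∫ q : PhS d × PhS d, ∫ P, G (q, P) := by
  have hg : Integrable (fun q : PhS d × PhS d => ∫ P, G (q, P)) (volume.prod volume) :=
    hG.integral_prod_left
  have hmp : MeasurePreserving (fun z : PhS d × PhS d => (z.1 - z.2, z.2)) (volume.prod volume)
      (volume.prod volume) := measurePreserving_sub_prod _ _
  have hg2 : Integrable (fun q : PhS d × PhS d => ∫ P, G ((q.1 - q.2, q.2), P))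
     (volume.prod volume) := hmp.integrable_comp_of_integrable hg
  rw [integral_integral_swap (f := fun Z Y => ∫ P, G ((Z - Y, Y), P)) hg2]
  change _ = ∫ q, (∫ P, G (q, P)) ∂(volume.prod volume)
  rw [integral_prod_symm _ hg]
  refine integral_congr_ae (Eventually.of_forall fun Y => ?_)
  exact integral_sub_right_eq_self (fun Z => ∫ P, G ((Z, Y), P)) Y

lemma rhs_fub {d : ℕ} (G : (PhS d × PhS d) × PhS d → ℂ) (R : PhS d)
    (hG : Integrable G ((volume.prod volume).prod volume)) :
    ∫ X : PhS d, ∫ q : PhS d × PhS d, G (q, X + (q.2 - R)) =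
      ∫ q : PhS d × PhS d, ∫ P, G (q, P) := by
  have hmp : MeasurePreserving
      (fun z : (PhS d × PhS d) × PhS d => (z.1, z.2 + (z.1.2 - R)))
      ((volume.prod volume).prod volume) ((volume.prod volume).prod volume) := by
    refine MeasurePreserving.skew_product (g := fun (q : PhS d × PhS d) P => P + (q.2 - R))
      (MeasurePreserving.id _) (by fun_prop) (Eventually.of_forall fun q => ?_)
    exact map_add_right_eq_self _ _
  have hg2 := hmp.integrable_comp_of_integrable hG
  change ∫ X : PhS d, (∫ q : PhS d × PhS d, G (q, X + (q.2 - R)) ∂(volume.prod volume)) = _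
  rw [← integral_integral_swap (f := fun (q : PhS d × PhS d) X => G (q, X + (q.2 - R))) hg2]
  refine integral_congr_ae (Eventually.of_forall fun q => ?_)
  exact integral_add_right_eq_self (fun X => G (q, X)) _

/-- Lemma 2.1 (case `N = 2`): the symplectic STFT of a Weyl product of two
Schwartz functions, with window `Φ₀ = π^d Φ₁ # Φ₂`, is given by a twisted
integral of the STFTs of the factors. -/
theorem symplSTFT_weylProd_formula
    (d : ℕ) (hd : 1 ≤ d) (Φ₁ Φ₂ a₁ a₂ : SchwartzMap (PhS d) ℂ)
    (Φ₀ : PhS d → ℂ) (hΦ₀ : Φ₀ = fun Z => ((Real.pi : ℂ) ^ d) * weylProd d (⇑Φ₁) (⇑Φ₂) Z)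
    (a₀ : PhS d → ℂ) (ha₀ : a₀ = weylProd d (⇑a₁) (⇑a₂)) :
    ∀ X₀ X₂ : PhS d,
      symplSTFT d Φ₀ a₀ (X₂ + X₀) (X₂ - X₀) =
        ∫ X₁ : PhS d,
          Complex.exp (2 * Complex.I * (symplForm (X₁ - X₀) (X₂ - X₀) : ℂ)) *
            symplSTFT d (⇑Φ₁) (⇑a₁) (X₁ + X₀) (X₁ - X₀) *
            symplSTFT d (⇑Φ₂) (⇑a₂) (X₂ + X₁) (X₂ - X₁) := by
  intro X₀ X₂
  set c := ((Real.pi : ℂ) ^ d)⁻¹ with hc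
  have hpi : (Real.pi : ℂ) ^ d ≠ 0 := pow_ne_zero _ (by exact_mod_cast Real.pi_ne_zero)
  have hcc : (starRingEnd ℂ) c = c := by simp [hc]
  have hG := GG_int Φ₁ a₁ (sFT a₂) (sFT Φ₂) (X₂ + X₀) (X₂ - X₀)
  set G := GG Φ₁ a₁ (sFT a₂) (sFT Φ₂) (X₂ + X₀) (X₂ - X₀) with hGdef
  have hL : symplSTFT d Φ₀ a₀ (X₂ + X₀) (X₂ - X₀) =
      c * c * ∫ Z, ∫ Y, ∫ P, G ((Z - Y, Y), P) := by
    unfold symplSTFT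
    rw [← hc, mul_assoc]
    congr 1
    rw [← integral_const_mul]
    refine integral_congr_ae (Eventually.of_forall fun Z => ?_)
    change a₀ Z * (starRingEnd ℂ) (Φ₀ (Z - (X₂ + X₀))) * ph (symplForm (X₂ - X₀) Z) = _
    rw [ha₀, hΦ₀]
    simp only [weyl_eq]
    rw [mul_inv_cancel_left₀ hpi, ← integral_conj, ← hc, mul_assoc, mul_assoc]
    congr 1
    rw [← integral_mul_const]
    refine integral_congr_ae (Eventually.of_forall fun Y => ?_)
    change _ * _ = _
    rw [← integral_mul_const, ← integral_const_mul]
    refine integral_congr_ae (Eventually.of_forall fun P => ?_)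
    simp only [hGdef, GG, th, sub_add_cancel, map_mul, ph_conj, ph_add, sub_eq_add_neg (symplForm Z Y)]
    ring
  have hR : ∀ X₁ : PhS d, 
      Complex.exp (2 * Complex.I * (symplForm (X₁ - X₀) (X₂ - X₀) : ℂ)) *
            symplSTFT d (⇑Φ₁) (⇑a₁) (X₁ + X₀) (X₁ - X₀) *
            symplSTFT d (⇑Φ₂) (⇑a₂) (X₂ + X₁) (X₂ - X₁) =
      c * c * ∫ q : PhS d × PhS d, G (q, X₁ + (q.2 - X₂)) := by
    intro X₁
    rw [stft_eq Φ₂ a₂]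
    unfold symplSTFT
    rw [← hc]
    change ph (symplForm (X₁ - X₀) (X₂ - X₀)) * _ * _ = _
    have := integral_prod_mul (μ := (volume : Measure (PhS d))) (ν := (volume : Measure (PhS d)))
      (fun U => a₁ U * (starRingEnd ℂ) (Φ₁ (U - (X₁ + X₀))) * ph (symplForm (X₁ - X₀) U))
      (fun Y => sFT a₂ Y * (starRingEnd ℂ) (sFT Φ₂ (Y - (X₂ - X₁))) *
        ph (symplForm (X₂ + X₁) Y + symplForm (X₂ - X₁) (X₂ + X₁)))
    have hr : ∀ p x y : ℂ, p * (c * x) * (c * y) = c * c * (p * (x * y)) := by intros; ring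
    change ph (symplForm (X₁ - X₀) (X₂ - X₀)) *
      (c * ∫ U, a₁ U * (starRingEnd ℂ) (Φ₁ (U - (X₁ + X₀))) * ph (symplForm (X₁ - X₀) U)) * _ = _
    rw [hr, ← this, ← integral_const_mul]
    congr 1
    refine integral_congr_ae (Eventually.of_forall fun q => ?_)
    obtain ⟨U, Y⟩ := q
    simp only [hGdef, GG]
    have e1 : U + Y - (X₂ + X₀) - (X₁ + (Y - X₂)) = U - (X₁ + X₀) := by abel
    have e2 : X₁ + (Y - X₂) = Y - (X₂ - X₁) := by abel
    have e3 : th (X₂ + X₀) (X₂ - X₀) (U + Y) Y (Y - (X₂ - X₁)) =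
      symplForm (X₁ - X₀) (X₂ - X₀) + symplForm (X₁ - X₀) U +
        (symplForm (X₂ + X₁) Y + symplForm (X₂ - X₁) (X₂ + X₁)) := by
      simp only [th, sf_add_left, sf_add_right, sf_sub_left, sf_sub_right, sf_self]
      rw [sf_swap Y X₂, sf_swap Y X₁, sf_swap U X₂, sf_swap U X₁, sf_swap U Y, sf_swap X₁ X₂,
        sf_swap X₀ X₂, sf_swap X₁ X₀]
      ring
    rw [e1, e2, e3]
    simp only [ph_add]
    ring
  simp only [hR]
  rw [hL, integral_const_mul, lhs_fub G hG, rhs_fub G X₂ hG]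

end
end

section
/- Let d ≥ 1, N ≥ 2, and let ω₀, …, ω_N ∈ 𝒫_E(ℝ^{2d}×ℝ^{2d}) satisfy the Weyl weight condition. Then there exist a weight ϑ ∈ 𝒫_E(ℝ^{2d}×ℝ^{2d}) and a constant C > 0 such that: (i) ϑ(X₁+X₀, X₁−X₀) ≤ C ω₀(X₂+X₀, X₂−X₀) ω_N(X₂+X₁, X₂−X₁) for all X₀, X₁, X₂ ∈ ℝ^{2d}, and (ii) 1 ≤ C ϑ(X_{N−1}+X₀, X_{N−1}−X₀) ∏_{j=1}^{N−1} ω_j(X_j+X_{j−1}, X_j−X_{j−1}) for all X₀, …, X_{N−1} ∈ ℝ^{2d}. -/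
open MeasureTheory Filter
open scoped ENNReal RealInnerProductSpace BigOperators

noncomputable section

/-- Lemma (intermediate weights): given moderate weights `ω₀,…,ω_N` satisfying
the Weyl weight condition, there is a moderate weight `ϑ` splitting the
condition into a bilinear part and an `(N-1)`-linear part. -/
theorem exists_intermediate_weight
    (d N : ℕ) (hd : 1 ≤ d) (hN : 2 ≤ N)
    (ω : Fin (N + 1) → (PhS d × PhS d → ℝ))
    (hω : ∀ j, IsModerateWeight (ω j))
    (hWcond : WeylWeightCond d N ω) :
    ∃ (ϑ : PhS d × PhS d → ℝ) (C : ℝ), IsModerateWeight ϑ ∧ 0 < C ∧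
      (∀ X₀ X₁ X₂ : PhS d,
        ϑ (X₁ + X₀, X₁ - X₀) ≤
          C * ω 0 (X₂ + X₀, X₂ - X₀) * ω (Fin.last N) (X₂ + X₁, X₂ - X₁)) ∧
      (∀ X : Fin N → PhS d,
        1 ≤ C * ϑ (X ⟨N - 1, by omega⟩ + X ⟨0, by omega⟩,
              X ⟨N - 1, by omega⟩ - X ⟨0, by omega⟩) *
            ∏ j : Fin (N - 1),
              ω ⟨j.1 + 1, by have := j.isLt; omega⟩
                (X ⟨j.1 + 1, by have := j.isLt; omega⟩ + X ⟨j.1, by have := j.isLt; omega⟩,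
                 X ⟨j.1 + 1, by have := j.isLt; omega⟩ - X ⟨j.1, by have := j.isLt; omega⟩)) := by
  obtain ⟨C, hC, hW⟩ := hWcond
  obtain ⟨M, rfl⟩ : ∃ M, N = M + 1 := ⟨N - 1, by omega⟩
  -- the auxiliary function
  set F : PhS d → PhS d → PhS d → ℝ := fun X₀ X₁ Z =>
    ω 0 (Z + X₀, Z - X₀) * ω (Fin.last (M + 1)) (Z + X₁, Z - X₁) with hF
  have hFpos : ∀ a b z, 0 < F a b z := fun a b z => mul_pos ((hω _).1 _) ((hω _).1 _)
  have hbdd : ∀ a b, BddBelow (Set.range (F a b)) := fun a b =>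
    ⟨0, by rintro _ ⟨z, rfl⟩; exact (hFpos a b z).le⟩
  let h : PhS d × PhS d → PhS d := fun A => (2⁻¹ : ℝ) • (A.1 - A.2)
  let k : PhS d × PhS d → PhS d := fun A => (2⁻¹ : ℝ) • (A.1 + A.2)
  have hh : ∀ X₀ X₁ : PhS d, h (X₁ + X₀, X₁ - X₀) = X₀ := by
    intro a b
    change (2⁻¹ : ℝ) • ((b + a) - (b - a)) = a
    module
  have hk : ∀ X₀ X₁ : PhS d, k (X₁ + X₀, X₁ - X₀) = X₁ := by
    intro a b
    change (2⁻¹ : ℝ) • ((b + a) + (b - a)) = b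
    module
  let ϑ : PhS d × PhS d → ℝ := fun A => ⨅ Z, F (h A) (k A) Z
  have hϑ : ∀ X₀ X₁ : PhS d, ϑ (X₁ + X₀, X₁ - X₀) = ⨅ Z, F X₀ X₁ Z := by
    intro a b
    change (⨅ Z, F (h (b + a, b - a)) (k (b + a, b - a)) Z) = _
    rw [hh, hk]
  -- the key bound
  have key : ∀ X : Fin (M + 1) → PhS d, ∀ Z : PhS d,
      1 ≤ C * F (X 0) (X (Fin.last M)) Z * ∏ j : Fin M, ω j.succ.castSucc
        (X j.succ + X j.castSucc, X j.succ - X j.castSucc) := by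
    intro X Z
    have := hW (Fin.snoc (α := fun _ => PhS d) X Z)
    rw [Fin.prod_univ_castSucc] at this
    have e0 : (Fin.snoc (α := fun _ => PhS d) X Z : Fin (M + 1 + 1) → PhS d) 0 = X 0 :=
      Fin.snoc_castSucc (α := fun _ => PhS d) Z X 0
    have e1 : ∀ j : Fin M, (Fin.snoc (α := fun _ => PhS d) X Z : Fin (M + 1 + 1) → PhS d)
        j.castSucc.succ = X j.succ := fun j =>
      Fin.snoc_castSucc (α := fun _ => PhS d) Z X j.succ
    simp only [Fin.snoc_last, Fin.succ_last, e0, e1, Fin.snoc_castSucc] at this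
    refine this.trans (le_of_eq ?_)
    simp only [hF, Fin.succ_castSucc]
    ring
  have hPpos : ∀ X : Fin (M + 1) → PhS d, 0 < ∏ j : Fin M, ω j.succ.castSucc
        (X j.succ + X j.castSucc, X j.succ - X j.castSucc) := fun X =>
    Finset.prod_pos fun j _ => (hω _).1 _
  have key2 : ∀ X : Fin (M + 1) → PhS d,
      (C * ∏ j : Fin M, ω j.succ.castSucc
        (X j.succ + X j.castSucc, X j.succ - X j.castSucc))⁻¹ ≤
        ⨅ Z, F (X 0) (X (Fin.last M)) Z := by
    intro X
    refine le_ciInf fun Z => ?_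
    have h1 := key X Z
    rw [inv_le_iff_one_le_mul₀ (mul_pos hC (hPpos X))]
    linarith
  have hM : (0 : Fin (M + 1)) ≠ Fin.last M := by
    intro h
    have := congrArg Fin.val h
    simp at this
    omega
  have hpos : ∀ A, 0 < ϑ A := by
    intro A
    have := key2 (fun i => if i = 0 then h A else k A)
    simp only [if_true, if_neg hM.symm] at this
    refine lt_of_lt_of_le (inv_pos.2 (mul_pos hC ?_)) this
    exact Finset.prod_pos fun j _ => (hω _).1 _
  have hmod : ∃ C c : ℝ, 0 < C ∧ 0 < c ∧
      ∀ x y, ϑ (x + y) ≤ C * ϑ x * Real.exp (c * ‖y‖) := by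
    obtain ⟨C0, c0, hC0, hc0, h0⟩ := (hω 0).2.2
    obtain ⟨C1, c1, hC1, hc1, h1⟩ := (hω (Fin.last (M + 1))).2.2
    refine ⟨C0 * C1, c0 + c1, by positivity, by positivity, fun x y => ?_⟩
    have nk : ‖(k y, -k y)‖ ≤ ‖y‖ := by
      have a1 := norm_fst_le y
      have a2 := norm_snd_le y
      have a3 := norm_add_le y.1 y.2
      have : ‖k y‖ ≤ ‖y‖ := by
        change ‖(2⁻¹ : ℝ) • (y.1 + y.2)‖ ≤ _
        rw [norm_smul, Real.norm_of_nonneg (by norm_num)]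
        linarith
      rw [Prod.norm_mk, norm_neg, max_self]; exact this
    have nh : ‖(h y, -h y)‖ ≤ ‖y‖ := by
      have a1 := norm_fst_le y
      have a2 := norm_snd_le y
      have a3 := norm_sub_le y.1 y.2
      have : ‖h y‖ ≤ ‖y‖ := by
        change ‖(2⁻¹ : ℝ) • (y.1 - y.2)‖ ≤ _
        rw [norm_smul, Real.norm_of_nonneg (by norm_num)]
        linarith
      rw [Prod.norm_mk, norm_neg, max_self]; exact this
    have hadd : h (x + y) = h x + h y := by
      change (2⁻¹ : ℝ) • ((x.1 + y.1) - (x.2 + y.2)) =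
        (2⁻¹ : ℝ) • (x.1 - x.2) + (2⁻¹ : ℝ) • (y.1 - y.2)
      module
    have kadd : k (x + y) = k x + k y := by
      change (2⁻¹ : ℝ) • ((x.1 + y.1) + (x.2 + y.2)) =
        (2⁻¹ : ℝ) • (x.1 + x.2) + (2⁻¹ : ℝ) • (y.1 + y.2)
      module
    have hK : 0 < C0 * C1 * Real.exp ((c0 + c1) * ‖y‖) := by positivity
    have main : ∀ Z, ϑ (x + y) ≤ C0 * C1 * Real.exp ((c0 + c1) * ‖y‖) * F (h x) (k x) Z := by
      intro Z
      have b : ϑ (x + y) ≤ F (h (x + y)) (k (x + y)) Z := ciInf_le (hbdd _ _) Z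
      rw [hadd, kadd] at b
      have b0 := h0 (Z + h x, Z - h x) (h y, -h y)
      have b1 := h1 (Z + k x, Z - k x) (k y, -k y)
      have p0 := (hω 0).1 (Z + h x, Z - h x)
      have p1 := (hω (Fin.last (M + 1))).1 (Z + k x, Z - k x)
      have q0 : ω 0 (Z + (h x + h y), Z - (h x + h y)) ≤
          C0 * ω 0 (Z + h x, Z - h x) * Real.exp (c0 * ‖y‖) := by
        have e : ((Z + h x, Z - h x) + (h y, -h y) : PhS d × PhS d) =
            (Z + (h x + h y), Z - (h x + h y)) := by
          rw [Prod.mk_add_mk]; congr 1 <;> abel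
        rw [e] at b0
        refine b0.trans ?_
        gcongr
      have q1 : ω (Fin.last (M + 1)) (Z + (k x + k y), Z - (k x + k y)) ≤
          C1 * ω (Fin.last (M + 1)) (Z + k x, Z - k x) * Real.exp (c1 * ‖y‖) := by
        have e : ((Z + k x, Z - k x) + (k y, -k y) : PhS d × PhS d) =
            (Z + (k x + k y), Z - (k x + k y)) := by
          rw [Prod.mk_add_mk]; congr 1 <;> abel
        rw [e] at b1
        refine b1.trans ?_
        gcongr
      refine b.trans ((mul_le_mul q0 q1 ((hω _).1 _).le (by positivity)).trans (le_of_eq ?_))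
      rw [add_mul, Real.exp_add]
      simp only [hF]
      ring
    have : ϑ (x + y) / (C0 * C1 * Real.exp ((c0 + c1) * ‖y‖)) ≤ ϑ x :=
      le_ciInf fun Z => by
        rw [div_le_iff₀' hK]; exact main Z
    rw [div_le_iff₀' hK] at this
    linarith
  refine ⟨ϑ, max C 1, ⟨hpos, ?_, hmod⟩, by positivity, ?_, ?_⟩
  · intro r
    obtain ⟨C', c', hC', hc', hm⟩ := hmod
    refine ⟨C' * ϑ 0 * Real.exp (c' * r), fun x hx => ?_⟩
    have := hm 0 x
    rw [zero_add] at this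
    refine this.trans ?_
    have := hpos 0
    gcongr
  · intro a b z
    rw [hϑ]
    refine (ciInf_le (hbdd a b) z).trans ?_
    rw [mul_assoc]
    exact le_mul_of_one_le_left (hFpos a b z).le (le_max_right _ _)
  · intro X
    have h2 := key2 X
    rw [← hϑ, inv_le_iff_one_le_mul₀ (mul_pos hC (hPpos X))] at h2
    have h3 : 1 ≤ C * ϑ (X (Fin.last M) + X 0, X (Fin.last M) - X 0) *
        ∏ j : Fin M, ω j.succ.castSucc
          (X j.succ + X j.castSucc, X j.succ - X j.castSucc) := by linarith
    have h4 : 1 ≤ max C 1 * ϑ (X (Fin.last M) + X 0, X (Fin.last M) - X 0) *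
        ∏ j : Fin M, ω j.succ.castSucc
          (X j.succ + X j.castSucc, X j.succ - X j.castSucc) := by
      refine h3.trans ?_
      have := hPpos X
      have := hpos (X (Fin.last M) + X 0, X (Fin.last M) - X 0)
      gcongr
      exact le_max_left _ _
    exact h4


end
end
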